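/- Let N = M ≥ 2 and t, τ ∈ ℝ, and consider the softmax reward with inner temperature t and outer temperature τ. (a) The spread allocation, in which agent i puts its entire effort on task i (r_{ii} = 1, r_{ij} = 0 for j ≠ i), yields task scores T_j = σ(t,N) for every j and team reward R = σ(t,N). (b) The trivial allocation, in which every agent puts its entire effort on task 1, yields team reward R = σ(τ,N). Consequently R_het ≥ max{σ(t,N), σ(τ,N)}, where σ(t,N) = e^t/(e^t + N − 1). -/

import Mathlib

open Finset

/-- An N×M allocation matrix is admissible if all entries are nonnegative and
every agent's (row's) efforts sum to 1. -/
def Admissible {N M : ℕ} (A : Fin N → Fin M → ℝ) : Prop :=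
  (∀ i j, 0 ≤ A i j) ∧ ∀ i, ∑ j, A i j = 1

/-- An allocation is homogeneous if all rows coincide. -/
def Homogeneous {N M : ℕ} (A : Fin N → Fin M → ℝ) : Prop :=
  ∀ i i' : Fin N, A i = A i'

/-- The column of task `j`. -/
def col {N M : ℕ} (A : Fin N → Fin M → ℝ) (j : Fin M) : Fin N → ℝ :=
  fun i => A i j

/-- Softmax inner aggregator with temperature `t`: the task score
`T_j(A) = Σ_i (e^{t·r_{ij}} / Σ_ℓ e^{t·r_{ℓj}}) · r_{ij}` applied to a column. -/
noncomputable def innerScore (t : ℝ) {N : ℕ} (a : Fin N → ℝ) : ℝ :=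
  ∑ i, Real.exp (t * a i) / (∑ l, Real.exp (t * a l)) * a i

/-- Softmax team reward with inner temperature `t` and outer temperature `τ`:
`R(A) = Σ_j (e^{τ·T_j} / Σ_ℓ e^{τ·T_ℓ}) · T_j`. -/
noncomputable def softReward (t τ : ℝ) {N : ℕ} (A : Fin N → Fin N → ℝ) : ℝ :=
  ∑ j, Real.exp (τ * innerScore t (col A j)) /
      (∑ l, Real.exp (τ * innerScore t (col A l))) * innerScore t (col A j)

/-- `σ(t,N) = e^t / (e^t + N − 1)`. -/
noncomputable def sigma' (t : ℝ) (N : ℕ) : ℝ :=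
  Real.exp t / (Real.exp t + N - 1)

/-- Heterogeneity gain `ΔR(t,τ;N) = R_het − R_hom` for the softmax reward. -/
noncomputable def hetGain (t τ : ℝ) (N : ℕ) : ℝ :=
  sSup {r : ℝ | ∃ A : Fin N → Fin N → ℝ, Admissible A ∧ softReward t τ A = r} -
    sSup {r : ℝ | ∃ A : Fin N → Fin N → ℝ,
      Admissible A ∧ Homogeneous A ∧ softReward t τ A = r}

/-
A softmax aggregate is a convex combination of its arguments. It therefore returns the common value
of constant arguments, so each of the two allocations makes one of the two aggregation levels
trivial, and it never exceeds an upper bound of its arguments, so rewards of admissible allocations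
are at most `1`. Without this bound the real `sSup` would take the junk value `0`.
-/

theorem sum_exp_div_sum_exp {ι : Type*} [Fintype ι] [Nonempty ι] (f : ι → ℝ) :
    ∑ i, Real.exp (f i) / ∑ l, Real.exp (f l) = 1 := by
  have hpos : 0 < ∑ l, Real.exp (f l) := sum_pos (fun _ _ => Real.exp_pos _) univ_nonempty
  rw [← sum_div, div_self hpos.ne']

section innerScore

variable {N : ℕ} (t : ℝ)

theorem innerScore_const [NeZero N] (c : ℝ) : innerScore t (fun _ : Fin N => c) = c := by
  rw [innerScore, ← sum_mul, sum_exp_div_sum_exp (fun _ : Fin N => t * c), one_mul]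

theorem innerScore_le [NeZero N] {a : Fin N → ℝ} {c : ℝ} (ha : ∀ i, a i ≤ c) :
    innerScore t a ≤ c :=
  calc innerScore t a
    _ ≤ ∑ i, Real.exp (t * a i) / (∑ l, Real.exp (t * a l)) * c :=
        sum_le_sum fun i _ => mul_le_mul_of_nonneg_left (ha i) (by positivity)
    _ = c := by rw [← sum_mul, sum_exp_div_sum_exp fun i => t * a i, one_mul]

theorem innerScore_single (k : Fin N) (c : ℝ) :
    innerScore t (Pi.single k c) = sigma' (t * c) N * c := by
  have hexp (l : Fin N) : Real.exp (t * (Pi.single k c : Fin N → ℝ) l) =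
      (if l = k then Real.exp (t * c) - 1 else 0) + 1 := by
    rw [Pi.single_apply]
    split_ifs <;> simp
  have hsum : ∑ l, Real.exp (t * (Pi.single k c : Fin N → ℝ) l) =
      Real.exp (t * c) + N - 1 := by
    simp only [hexp, sum_add_distrib, sum_ite_eq', mem_univ, if_true, sum_const, card_univ,
      Fintype.card_fin, nsmul_eq_mul]
    ring
  rw [innerScore, hsum, sum_eq_single k (fun i _ hik => by simp [hik]) (by simp),
    Pi.single_eq_same, sigma']

end innerScore

section softReward

variable {N : ℕ} (t τ : ℝ)

theorem softReward_eq_innerScore (A : Fin N → Fin N → ℝ) :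
    softReward t τ A = innerScore τ (fun j => innerScore t (col A j)) :=
  rfl

theorem softReward_eq_of_forall_innerScore_eq [NeZero N] {A : Fin N → Fin N → ℝ} {c : ℝ}
    (hA : ∀ j, innerScore t (col A j) = c) : softReward t τ A = c := by
  simp only [softReward_eq_innerScore, hA, innerScore_const]

theorem softReward_const_rows [NeZero N] (a : Fin N → ℝ) :
    softReward t τ (fun _ => a) = innerScore τ a :=
  congrArg (innerScore τ) (funext fun j => innerScore_const t (a j))

theorem Admissible.le_one {M : ℕ} {A : Fin N → Fin M → ℝ} (hA : Admissible A)
    (i : Fin N) (j : Fin M) : A i j ≤ 1 :=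
  hA.2 i ▸ single_le_sum (fun j' _ => hA.1 i j') (mem_univ j)

theorem Admissible.softReward_le_one [NeZero N] {A : Fin N → Fin N → ℝ} (hA : Admissible A) :
    softReward t τ A ≤ 1 :=
  innerScore_le τ fun j => innerScore_le t fun i => hA.le_one i j

theorem Admissible.softReward_le_sSup [NeZero N] {A : Fin N → Fin N → ℝ} (hA : Admissible A) :
    softReward t τ A ≤
      sSup {r : ℝ | ∃ B : Fin N → Fin N → ℝ, Admissible B ∧ softReward t τ B = r} := by
  refine le_csSup ⟨1, ?_⟩ ⟨A, hA, rfl⟩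
  rintro _ ⟨B, hB, rfl⟩
  exact hB.softReward_le_one t τ

end softReward

/-- The allocation in which each agent `i` puts its entire effort on the task `f i`. The spread
allocation is `pureAllocation id`; the trivial allocation is the case of constant `f`. -/
def pureAllocation {N M : ℕ} (f : Fin N → Fin M) : Fin N → Fin M → ℝ :=
  fun i => Pi.single (f i) 1

section pureAllocation

variable {N : ℕ} (t τ : ℝ)

theorem admissible_pureAllocation {M : ℕ} (f : Fin N → Fin M) :
    Admissible (pureAllocation f) :=
  ⟨fun i j => (Pi.single_nonneg.mpr zero_le_one : 0 ≤ (Pi.single (f i) 1 : Fin M → ℝ)) j,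
    fun i => by simp [pureAllocation]⟩

theorem col_pureAllocation_perm (e : Equiv.Perm (Fin N)) (j : Fin N) :
    col (pureAllocation e) j = Pi.single (e.symm j) 1 := by
  ext i
  simp only [col, pureAllocation, Pi.single_apply, e.eq_symm_apply, eq_comm]

theorem innerScore_col_pureAllocation_perm (e : Equiv.Perm (Fin N)) (j : Fin N) :
    innerScore t (col (pureAllocation e) j) = sigma' t N := by
  rw [col_pureAllocation_perm, innerScore_single, mul_one, mul_one]

theorem softReward_pureAllocation_perm [NeZero N] (e : Equiv.Perm (Fin N)) :
    softReward t τ (pureAllocation e) = sigma' t N :=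
  softReward_eq_of_forall_innerScore_eq t τ (innerScore_col_pureAllocation_perm t e)

theorem softReward_pureAllocation_const [NeZero N] (k : Fin N) :
    softReward t τ (pureAllocation fun _ => k) = sigma' τ N := by
  unfold pureAllocation
  rw [softReward_const_rows, innerScore_single, mul_one, mul_one]

end pureAllocation

/-- for the softmax reward with `N = M ≥ 2`:
(a) the spread allocation (agent `i` puts all effort on task `i`) gives every
task score equal to `σ(t,N)` and team reward `σ(t,N)`;
(b) the trivial allocation (every agent on task 1) gives team reward `σ(τ,N)`.
Consequently `R_het ≥ max{σ(t,N), σ(τ,N)}`. -/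
theorem stmt8 (N : ℕ) (hN : 2 ≤ N) (t τ : ℝ) :
    (∀ j : Fin N,
        innerScore t (col (fun i j' : Fin N => if i = j' then (1 : ℝ) else 0) j) =
          sigma' t N) ∧
    softReward t τ (fun i j : Fin N => if i = j then (1 : ℝ) else 0) = sigma' t N ∧
    softReward t τ
        (fun (_ : Fin N) (j : Fin N) => if j = (⟨0, by omega⟩ : Fin N) then (1 : ℝ) else 0) =
      sigma' τ N ∧
    max (sigma' t N) (sigma' τ N) ≤
      sSup {r : ℝ | ∃ A : Fin N → Fin N → ℝ, Admissible A ∧ softReward t τ A = r} := by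
  have : NeZero N := ⟨by omega⟩
  have hspread : (fun i j : Fin N => if i = j then (1 : ℝ) else 0) =
      pureAllocation (Equiv.refl (Fin N)) := by
    ext i j
    simp only [pureAllocation, Equiv.refl_apply, Pi.single_apply, eq_comm]
  have htrivial : (fun (_ : Fin N) (j : Fin N) =>
      if j = (⟨0, by omega⟩ : Fin N) then (1 : ℝ) else 0) =
        pureAllocation fun _ => ⟨0, by omega⟩ := by
    ext i j
    simp only [pureAllocation, Pi.single_apply]
  rw [hspread, htrivial]
  have hR_spread := softReward_pureAllocation_perm t τ (Equiv.refl (Fin N))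
  have hR_trivial := softReward_pureAllocation_const t τ (⟨0, by omega⟩ : Fin N)
  refine ⟨innerScore_col_pureAllocation_perm t _, hR_spread, hR_trivial, max_le ?_ ?_⟩
  · exact hR_spread ▸ (admissible_pureAllocation _).softReward_le_sSup t τ
  · exact hR_trivial ▸ (admissible_pureAllocation _).softReward_le_sSup t τ
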